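/- arXiv:1205.2956 — 10 statements merged into one kernel-verified Lean document; each statement's English description precedes it below -/
import Mathlib

section
/- Let r ≥ 0, s > 0, u > 0 be fixed integers and let Q(t) be a nonzero polynomial with positive integer coefficients. For a natural number m define P_m(t) = t^{2m+r+s} − t^{2m+r} − Q(t)·t^m − t^u + 1, and suppose the leading-term condition holds: 2m+r+s > m + deg Q and 2m+r+s > u. Then P_m has exactly one real root strictly greater than 1. -/
open Polynomial Filter Real

/-!
Put `N = 2m+r+s` and `R = t^(2m+r) + Q t^m + t^u`, so that `P = t^N + 1 - R`, where `R` has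
nonnegative coefficients, degree less than `N`, and `R(1) = 2 + Q(1) > 2`; hence `P(1) < 0`.

Existence: for `t ≥ 1` one has `R(t) ≤ R(1) t^(N-1)`, so `P(R(1)) ≥ 1 > 0`, and the intermediate
value theorem on `[1, R(1)]` applies.

Uniqueness: after the substitution `t = y^(1/N)` every monomial `t^j` with `j ≤ N` becomes the
concave function `y^(j/N)`, while `t^N + 1` becomes affine. So `P` is convex in `y = t^N`. A convex
function that is negative at `1` cannot vanish at two points to the right of `1`.
-/

/-- Concavity of `y ↦ y^(j/N)` between `1` and `b^N`, written in the variable `t = y^(1/N)`. -/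
lemma pow_concave_in_pow {N j : ℕ} (hN : 0 < N) (hj : j ≤ N) {a b α β : ℝ}
    (ha : 0 ≤ a) (hb : 0 ≤ b) (hα : 0 ≤ α) (hβ : 0 ≤ β) (hαβ : α + β = 1)
    (h : α + β * b ^ N = a ^ N) : α + β * b ^ j ≤ a ^ j := by
  have hN' : (0 : ℝ) < N := by exact_mod_cast hN
  have key : ∀ x : ℝ, 0 ≤ x → (x ^ N) ^ ((j : ℝ) / N) = x ^ j := by
    intro x hx
    rw [← Real.rpow_natCast x N, ← Real.rpow_mul hx, mul_div_cancel₀ _ hN'.ne',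
      Real.rpow_natCast]
  have hc := Real.concaveOn_rpow (p := (j : ℝ) / N) (by positivity)
    ((div_le_one hN').2 (by exact_mod_cast hj))
  have h2 := hc.2 (show (1 : ℝ) ∈ Set.Ici 0 by simp)
    (show b ^ N ∈ Set.Ici (0 : ℝ) from pow_nonneg hb N) hα hβ hαβ
  simp only [smul_eq_mul, mul_one, Real.one_rpow] at h2
  rwa [h, key a ha, key b hb] at h2

lemma eval_concave_in_pow {N : ℕ} (hN : 0 < N) (R : ℝ[X]) (hR : ∀ i, 0 ≤ R.coeff i)
    (hd : R.natDegree ≤ N) {a b α β : ℝ}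
    (ha : 0 ≤ a) (hb : 0 ≤ b) (hα : 0 ≤ α) (hβ : 0 ≤ β) (hαβ : α + β = 1)
    (h : α + β * b ^ N = a ^ N) : α * R.eval 1 + β * R.eval b ≤ R.eval a := by
  simp only [eval_eq_sum_range, Finset.mul_sum, ← Finset.sum_add_distrib]
  refine Finset.sum_le_sum fun j hj => ?_
  have hj' : j ≤ N := by
    have := Finset.mem_range.1 hj
    omega
  have := mul_le_mul_of_nonneg_left
    (pow_concave_in_pow hN hj' ha hb hα hβ hαβ h) (hR j)
  rw [one_pow]
  linarith

lemma eval_le_eval_one_mul_pow {k : ℕ} (R : ℝ[X]) (hR : ∀ i, 0 ≤ R.coeff i)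
    (hd : R.natDegree ≤ k) {x : ℝ} (hx : 1 ≤ x) : R.eval x ≤ R.eval 1 * x ^ k := by
  simp only [eval_eq_sum_range, Finset.sum_mul]
  refine Finset.sum_le_sum fun j hj => ?_
  have hj' : j ≤ k := by
    have := Finset.mem_range.1 hj
    omega
  rw [one_pow, mul_one]
  exact mul_le_mul_of_nonneg_left (pow_le_pow_right₀ hx hj') (hR j)

/-- Convexity of `t^N + 1 - R(t)` in `t^N`, together with its negativity at `1`, rules out two
distinct roots beyond `1`. -/
lemma no_two_roots {N : ℕ} (hN : 0 < N) (R : ℝ[X]) (hR : ∀ i, 0 ≤ R.coeff i)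
    (hd : R.natDegree ≤ N) (h1 : 2 < R.eval 1) {a b : ℝ} (ha : 1 < a) (hab : a < b)
    (hra : R.eval a = a ^ N + 1) (hrb : R.eval b = b ^ N + 1) : False := by
  have hA : 1 < a ^ N := one_lt_pow₀ ha hN.ne'
  have hB : a ^ N < b ^ N := pow_lt_pow_left₀ hab (by linarith) hN.ne'
  have hpos : 0 < b ^ N - 1 := by linarith
  -- `a ^ N` is the combination of `1` and `b ^ N` with weights `α` and `β`
  obtain ⟨β, hβ⟩ : ∃ β, β = (a ^ N - 1) / (b ^ N - 1) := ⟨_, rfl⟩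
  have hβ0 : 0 ≤ β := hβ ▸ div_nonneg (by linarith) hpos.le
  have hβ1 : β < 1 := by
    rw [hβ, div_lt_one hpos]
    linarith
  have hβm : β * (b ^ N - 1) = a ^ N - 1 := by rw [hβ, div_mul_cancel₀ _ hpos.ne']
  have key := eval_concave_in_pow hN R hR hd (a := a) (b := b) (α := 1 - β) (β := β)
    (by linarith) (by linarith) (by linarith) hβ0 (by ring) (by linarith)
  rw [hra, hrb] at key
  have := mul_lt_mul_of_pos_left h1 (sub_pos.2 hβ1)
  linarith

/-- For fixed integers `r ≥ 0`, `s > 0`, `u > 0` and a nonzero polynomial `Q` with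
nonnegative-integer coefficients, under the leading-term condition the polynomial
`P_m(t) = t^(2m+r+s) − t^(2m+r) − Q(t)·t^m − t^u + 1` has exactly one real root
strictly greater than 1. -/
theorem stmt_1 (r s u : ℕ) (hs : 0 < s) (hu : 0 < u)
    (Q : Polynomial ℝ) (hQ : Q ≠ 0) (hQc : ∀ i : ℕ, ∃ n : ℕ, Q.coeff i = (n : ℝ))
    (m : ℕ)
    (hlead1 : m + Q.natDegree < 2 * m + r + s) (hlead2 : u < 2 * m + r + s) :
    ∃! x : ℝ, 1 < x ∧
      (X ^ (2 * m + r + s) - X ^ (2 * m + r) - Q * X ^ m - X ^ u + 1 :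
        Polynomial ℝ).IsRoot x := by
  have hQ0 : ∀ i, 0 ≤ Q.coeff i := fun i => by
    obtain ⟨n, hn⟩ := hQc i
    rw [hn]
    positivity
  have hQ1 : 0 < Q.eval 1 := by
    rw [eval_eq_sum_range]
    refine Finset.sum_pos' (fun i _ => by simpa using hQ0 i)
      ⟨Q.natDegree, by simp, ?_⟩
    have h0 : Q.coeff Q.natDegree ≠ 0 := by simpa using hQ
    simpa using lt_of_le_of_ne (hQ0 _) h0.symm
  obtain ⟨R, hRdef⟩ : ∃ R : ℝ[X], R = X ^ (2 * m + r) + Q * X ^ m + X ^ u := ⟨_, rfl⟩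
  obtain ⟨k, hk⟩ : ∃ k, 2 * m + r + s = k + 1 := ⟨2 * m + r + s - 1, by omega⟩
  have hR : ∀ i, 0 ≤ R.coeff i := by
    intro i
    rw [hRdef, coeff_add, coeff_add, coeff_X_pow, coeff_X_pow, coeff_mul_X_pow']
    have := hQ0 (i - m)
    split_ifs <;> positivity
  have hd : R.natDegree ≤ k := by
    rw [hRdef]
    refine natDegree_add_le_of_degree_le (natDegree_add_le_of_degree_le ?_ ?_) ?_
    · rw [natDegree_X_pow]
      omega
    · refine natDegree_mul_le.trans ?_
      rw [natDegree_X_pow]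
      omega
    · rw [natDegree_X_pow]
      omega
  have hR1 : 2 < R.eval 1 := by
    simp [hRdef]
    linarith
  have hP : (X ^ (2 * m + r + s) - X ^ (2 * m + r) - Q * X ^ m - X ^ u + 1 : ℝ[X])
      = X ^ (k + 1) + 1 - R := by
    rw [hRdef, hk]
    ring
  have hroot : ∀ x : ℝ, (X ^ (k + 1) + 1 - R : ℝ[X]).IsRoot x ↔ R.eval x = x ^ (k + 1) + 1 := by
    intro x
    rw [IsRoot.def]
    simp only [eval_sub, eval_add, eval_pow, eval_X, eval_one]
    rw [sub_eq_zero, eq_comm]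
  rw [hP]
  simp only [hroot]
  have hneg : (X ^ (k + 1) + 1 - R : ℝ[X]).eval 1 < 0 := by
    simp
    linarith
  have hge : 0 ≤ (X ^ (k + 1) + 1 - R : ℝ[X]).eval (R.eval 1) := by
    have := eval_le_eval_one_mul_pow R hR hd (x := R.eval 1) (by linarith)
    simp only [eval_sub, eval_add, eval_pow, eval_X, eval_one]
    rw [pow_succ']
    linarith
  obtain ⟨x, hx, hx0⟩ := intermediate_value_Icc (show (1 : ℝ) ≤ R.eval 1 by linarith)
    (X ^ (k + 1) + 1 - R : ℝ[X]).continuous.continuousOn ⟨hneg.le, hge⟩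
  have hx1 : 1 < x := by
    refine lt_of_le_of_ne hx.1 ?_
    rintro rfl
    exact hneg.ne hx0
  have hxr := (hroot x).1 hx0
  refine ⟨x, ⟨hx1, hxr⟩, ?_⟩
  rintro y ⟨hy1, hyr⟩
  rcases lt_trichotomy y x with h | h | h
  · exact (no_two_roots k.succ_pos R hR (by omega) hR1 hy1 h hyr hxr).elim
  · exact h
  · exact (no_two_roots k.succ_pos R hR (by omega) hR1 hx1 h hxr hyr).elim
end

section
/- Let r ≥ 0, s > 0, u > 0 be fixed integers and let Q(t) be a nonzero polynomial with positive integer coefficients, and for each sufficiently large natural number m let λ_m > 1 denote the unique real root greater than 1 of P_m(t) = t^{2m+r+s} − t^{2m+r} − Q(t)·t^m − t^u + 1. Then for any real constants c₁ and c₂ with 0 < c₁ < 1 and c₂ > 1, the inequalities m^{c₁/m} < λ_m < m^{c₂/m} hold for all sufficiently large m. -/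
open Polynomial Filter Real

/-!
Put `x = m ^ (c / m)`, so that `x ^ m = m ^ c` and `x → 1`. Then
`P_m(x) = x ^ m * (x ^ r * (x ^ m * (x ^ s - 1)) - Q(x)) - (x ^ u - 1)`,
and `x - 1` is comparable to `c * log m / m`. Hence `x ^ m * (x ^ s - 1)` tends to `0` if `c < 1`
and to `∞` if `c > 1`, while `Q(x) → Q(1) > 0`. So eventually `P_m` is negative at `m ^ (c₁ / m)`
and positive at `m ^ (c₂ / m)`; the intermediate value theorem gives a root strictly between these
points, and by uniqueness that root is `λ_m`.
-/

/-- The test point `m ^ (c / m)`, whose `m`-th power is `m ^ c`. -/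
noncomputable def testPoint (c : ℝ) (m : ℕ) : ℝ := (m : ℝ) ^ (c / (m : ℝ))

/-- The value `P_m(x)`. -/
noncomputable def valP (r s u : ℕ) (Q : Polynomial ℝ) (m : ℕ) (x : ℝ) : ℝ :=
  x ^ (2 * m + r + s) - x ^ (2 * m + r) - Q.eval x * x ^ m - x ^ u + 1

lemma valP_eq (r s u : ℕ) (Q : Polynomial ℝ) (m : ℕ) (x : ℝ) :
    valP r s u Q m x =
      x ^ m * (x ^ r * (x ^ m * (x ^ s - 1)) - Q.eval x) - (x ^ u - 1) := by
  unfold valP; ring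

lemma continuous_valP (r s u : ℕ) (Q : Polynomial ℝ) (m : ℕ) :
    Continuous (valP r s u Q m) := by
  unfold valP; fun_prop

lemma testPoint_eq_exp (c : ℝ) {m : ℕ} (hm : 0 < m) :
    testPoint c m = exp (c * (log m / m)) := by
  rw [testPoint, rpow_def_of_pos (by exact_mod_cast hm)]
  congr 1; ring

lemma testPoint_pow (c : ℝ) {m : ℕ} (hm : 0 < m) : testPoint c m ^ m = (m : ℝ) ^ c := by
  have : (m : ℝ) ≠ 0 := by positivity
  rw [testPoint, ← rpow_natCast, ← rpow_mul (by positivity)]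
  congr 1; field_simp

lemma one_lt_testPoint {c : ℝ} (hc : 0 < c) {m : ℕ} (hm : 1 < m) : 1 < testPoint c m := by
  have : (1 : ℝ) < m := by exact_mod_cast hm
  exact one_lt_rpow this (by positivity)

lemma tendsto_log_div : Tendsto (fun m : ℕ => log (m : ℝ) / m) atTop (nhds 0) := by
  have h := (isLittleO_log_id_atTop.tendsto_div_nhds_zero).comp
    (tendsto_natCast_atTop_atTop (R := ℝ))
  exact h

lemma tendsto_testPoint (c : ℝ) : Tendsto (testPoint c) atTop (nhds 1) := by
  have h : Tendsto (fun m : ℕ => exp (c * (log (m : ℝ) / m))) atTop (nhds 1) := by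
    have := (continuous_exp.tendsto _).comp (tendsto_log_div.const_mul c)
    simpa [Function.comp_def] using this
  refine h.congr' ?_
  filter_upwards [eventually_gt_atTop 0] with m hm
  exact (testPoint_eq_exp c hm).symm

lemma tendsto_eval_testPoint (Q : Polynomial ℝ) (c : ℝ) :
    Tendsto (fun m => Q.eval (testPoint c m)) atTop (nhds (Q.eval 1)) :=
  (Q.continuous.tendsto 1).comp (tendsto_testPoint c)

/-- Below the critical exponent, `x ^ m * (x - 1) → 0`, because `x - 1 ≤ 2 * c * log m / m`. -/
lemma tendsto_sub_one_zero {c : ℝ} (hc : 0 < c) (hc1 : c < 1) :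
    Tendsto (fun m => testPoint c m ^ m * (testPoint c m - 1)) atTop (nhds 0) := by
  have hlim : Tendsto (fun m : ℕ => 2 * c * (log (m : ℝ) / (m : ℝ) ^ (1 - c))) atTop (nhds 0) := by
    have h := ((isLittleO_log_rpow_atTop (sub_pos.2 hc1)).tendsto_div_nhds_zero).comp
      (tendsto_natCast_atTop_atTop (R := ℝ))
    simpa using h.const_mul (2 * c)
  refine squeeze_zero' ?_ ?_ hlim
  · filter_upwards [eventually_gt_atTop 1] with m hm
    have := one_lt_testPoint hc hm
    exact mul_nonneg (by positivity) (by linarith)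
  · have hsmall : ∀ᶠ m : ℕ in atTop, c * (log (m : ℝ) / m) < 1 := by
      have h := tendsto_log_div.const_mul c
      rw [mul_zero] at h
      exact h.eventually_lt_const one_pos
    filter_upwards [eventually_gt_atTop 1, hsmall] with m hm hsm
    have hm0 : (0 : ℝ) < m := by positivity
    have hy : 0 ≤ c * (log (m : ℝ) / m) := by
      have := log_natCast_nonneg m
      positivity
    have hb := abs_exp_sub_one_le (x := c * (log (m : ℝ) / m)) (by rw [abs_of_nonneg hy]; linarith)
    rw [abs_of_nonneg hy] at hb
    rw [testPoint_pow c (by omega), testPoint_eq_exp c (by omega)]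
    calc (m : ℝ) ^ c * (exp (c * (log m / m)) - 1)
        ≤ (m : ℝ) ^ c * (2 * (c * (log m / m))) := by
          gcongr
          exact (le_abs_self _).trans hb
      _ = 2 * c * (log (m : ℝ) / (m : ℝ) ^ (1 - c)) := by
          rw [rpow_sub hm0, rpow_one]
          field_simp

/-- Above the critical exponent, `x ^ m * (x - 1) → ∞`, because `x - 1 ≥ c * log m / m`. -/
lemma tendsto_sub_one_atTop {c : ℝ} (hc1 : 1 < c) :
    Tendsto (fun m => testPoint c m ^ m * (testPoint c m - 1)) atTop atTop := by
  have hlim : Tendsto (fun m : ℕ => (m : ℝ) ^ (c - 1) * (c * log (m : ℝ))) atTop atTop := by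
    have hcast := tendsto_natCast_atTop_atTop (R := ℝ)
    exact ((tendsto_rpow_atTop (sub_pos.2 hc1)).comp hcast).atTop_mul_atTop₀
      ((tendsto_log_atTop.comp hcast).const_mul_atTop (by linarith))
  refine tendsto_atTop_mono' _ ?_ hlim
  filter_upwards [eventually_gt_atTop 0] with m hm
  have hm0 : (0 : ℝ) < m := by positivity
  rw [testPoint_pow c hm, testPoint_eq_exp c hm]
  calc (m : ℝ) ^ (c - 1) * (c * log (m : ℝ))
      = (m : ℝ) ^ c * (c * (log m / m)) := by
        rw [rpow_sub hm0, rpow_one]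
        field_simp
    _ ≤ (m : ℝ) ^ c * (exp (c * (log m / m)) - 1) := by
        gcongr
        linarith [add_one_le_exp (c * (log (m : ℝ) / m))]

lemma eval_one_pos (Q : Polynomial ℝ) (hQ : Q ≠ 0)
    (hQc : ∀ i : ℕ, ∃ n : ℕ, Q.coeff i = (n : ℝ)) : 0 < Q.eval 1 := by
  rw [eval_eq_sum, Polynomial.sum]
  refine Finset.sum_pos (fun i hi => ?_) (by simpa using hQ)
  obtain ⟨n, hn⟩ := hQc i
  have hne : Q.coeff i ≠ 0 := mem_support_iff.1 hi
  have h0 : 0 ≤ Q.coeff i := by rw [hn]; positivity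
  simpa using lt_of_le_of_ne h0 hne.symm

lemma eventually_valP_neg (r s u : ℕ) (Q : Polynomial ℝ) (hQ1 : 0 < Q.eval 1)
    {c : ℝ} (hc : 0 < c) (hc1 : c < 1) :
    ∀ᶠ m in atTop, valP r s u Q m (testPoint c m) < 0 := by
  have hx := tendsto_testPoint c
  have hgeom : Tendsto (fun m => ∑ i ∈ Finset.range s, testPoint c m ^ i) atTop
      (nhds (∑ i ∈ Finset.range s, (1 : ℝ) ^ i)) :=
    tendsto_finsetSum _ fun i _ => hx.pow i
  have hlim := ((hx.pow r).mul ((tendsto_sub_one_zero hc hc1).mul hgeom)).sub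
    (tendsto_eval_testPoint Q c)
  rw [zero_mul, mul_zero, zero_sub] at hlim
  filter_upwards [hlim.eventually_lt_const (neg_lt_zero.2 hQ1), eventually_gt_atTop 1] with m h hm
  have h1 := one_lt_testPoint hc hm
  rw [mul_assoc (testPoint c m ^ m), mul_geom_sum] at h
  have hu1 : 1 ≤ testPoint c m ^ u := one_le_pow₀ h1.le
  have hneg := mul_neg_of_pos_of_neg (pow_pos (one_pos.trans h1) m) h
  rw [valP_eq]
  linarith

lemma eventually_valP_pos (r s u : ℕ) (hs : 0 < s) (Q : Polynomial ℝ)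
    {c : ℝ} (hc1 : 1 < c) :
    ∀ᶠ m in atTop, 0 < valP r s u Q m (testPoint c m) := by
  have hx := tendsto_testPoint c
  have hlim := (tendsto_sub_one_atTop hc1).atTop_add
    ((tendsto_eval_testPoint Q c).neg.add (hx.pow u).neg)
  filter_upwards [hlim.eventually_ge_atTop 0, eventually_gt_atTop 1] with m h hm
  have h1 := one_lt_testPoint (one_pos.trans hc1) hm
  rw [valP_eq]
  set x := testPoint c m
  have hm1 : 1 ≤ x ^ m := one_le_pow₀ h1.le
  have hu1 : 1 ≤ x ^ u := one_le_pow₀ h1.le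
  have hr1 : 1 ≤ x ^ r := one_le_pow₀ h1.le
  have hs1 : x ≤ x ^ s := le_self_pow₀ h1.le hs.ne'
  have ha : x ^ m * (x - 1) ≤ x ^ m * (x ^ s - 1) := by gcongr
  have hb : x ^ m * (x ^ s - 1) ≤ x ^ r * (x ^ m * (x ^ s - 1)) :=
    le_mul_of_one_le_left (mul_nonneg (by linarith) (by linarith)) hr1
  have hd : x ^ u ≤ x ^ r * (x ^ m * (x ^ s - 1)) - Q.eval x := by linarith
  have he := le_mul_of_one_le_left ((zero_le_one.trans hu1).trans hd) hm1
  linarith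

/-- Let `λ_m > 1` be (eventually in `m`) the unique real root greater than `1` of
`P_m(t) = t^(2m+r+s) − t^(2m+r) − Q(t)·t^m − t^u + 1`.  Then for any real `c₁, c₂` with
`0 < c₁ < 1 < c₂`, the inequalities `m^(c₁/m) < λ_m < m^(c₂/m)` hold for all
sufficiently large `m`. -/
theorem stmt_2 (r s u : ℕ) (hs : 0 < s) (hu : 0 < u)
    (Q : Polynomial ℝ) (hQ : Q ≠ 0) (hQc : ∀ i : ℕ, ∃ n : ℕ, Q.coeff i = (n : ℝ))
    (lam : ℕ → ℝ)
    (hlam : ∀ᶠ m : ℕ in atTop, 1 < lam m ∧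
      (lam m) ^ (2 * m + r + s) - (lam m) ^ (2 * m + r)
        - Q.eval (lam m) * (lam m) ^ m - (lam m) ^ u + 1 = 0 ∧
      ∀ x : ℝ, 1 < x →
        x ^ (2 * m + r + s) - x ^ (2 * m + r) - Q.eval x * x ^ m - x ^ u + 1 = 0 →
        x = lam m)
    (c₁ c₂ : ℝ) (hc₁0 : 0 < c₁) (hc₁1 : c₁ < 1) (hc₂ : 1 < c₂) :
    ∀ᶠ m : ℕ in atTop,
      (m : ℝ) ^ (c₁ / (m : ℝ)) < lam m ∧ lam m < (m : ℝ) ^ (c₂ / (m : ℝ)) := by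
  filter_upwards [hlam, eventually_gt_atTop 1,
    eventually_valP_neg r s u Q (eval_one_pos Q hQ hQc) hc₁0 hc₁1,
    eventually_valP_pos r s u hs Q hc₂] with m hroot hm hneg hpos
  have hlt : testPoint c₁ m ≤ testPoint c₂ m := by
    have : (1 : ℝ) ≤ m := by exact_mod_cast hm.le
    exact rpow_le_rpow_of_exponent_le this (by gcongr; linarith)
  obtain ⟨x, hx, hx0⟩ := intermediate_value_Ioo hlt (continuous_valP r s u Q m).continuousOn
    ⟨hneg, hpos⟩
  have hxl : x = lam m := hroot.2.2 x ((one_lt_testPoint hc₁0 hm).trans hx.1) hx0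
  rw [← hxl]
  exact hx
end

section
/- Let r ≥ 0, s > 0, u > 0 be fixed integers and let Q(t) be a nonzero polynomial with positive integer coefficients, and for each sufficiently large natural number m let λ_m > 1 denote the unique real root greater than 1 of P_m(t) = t^{2m+r+s} − t^{2m+r} − Q(t)·t^m − t^u + 1. Then the limit as m → ∞ of (m · log λ_m)/(log m) equals 1. -/
open Polynomial Filter Real

/-!
Write `L = log λ_m > 0`. The equation for `λ = λ_m` reads
`λ^(2m+r) (λ^s - 1) = Q(λ) λ^m + λ^u - 1`, where `1 ≤ Q(λ) ≤ Q(1) λ^(deg Q)`. Together with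
`s L ≤ λ^s - 1 ≤ s L λ^s` this gives, with constants independent of `m`,

* `1 ≤ s L exp ((m + r + s) L)` (`one_le_of_root`), and
* `L exp (m L) ≤ (Q(1) + 1) exp ((deg Q + u) L)` (`le_of_root`).

If `m L ≤ (1 - ε) log m`, the right side of the first inequality is at most
`s (log m) m^(-ε/2)` for large `m`, which is eventually below `1` (`lower_asymp`). If
`m L ≥ (1 + ε) log m`, the second inequality forces `log m ≤ Q(1) + 1` for large `m`
(`upper_asymp`). Hence `m L / log m → 1`.
-/

lemma one_le_eval (Q : Polynomial ℝ) (hQ : Q ≠ 0)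
    (hQc : ∀ i : ℕ, ∃ n : ℕ, Q.coeff i = (n : ℝ)) {x : ℝ} (hx : 1 ≤ x) : 1 ≤ Q.eval x := by
  have hnn : ∀ i, 0 ≤ Q.coeff i := fun i => by
    obtain ⟨n, hn⟩ := hQc i
    rw [hn]; positivity
  have hlead : 1 ≤ Q.coeff Q.natDegree := by
    obtain ⟨n, hn⟩ := hQc Q.natDegree
    have h0 : Q.coeff Q.natDegree ≠ 0 := by simpa using hQ
    rw [hn] at h0 ⊢
    have : n ≠ 0 := by exact_mod_cast h0
    exact_mod_cast Nat.one_le_iff_ne_zero.mpr this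
  rw [eval_eq_sum_range]
  calc (1 : ℝ) ≤ Q.coeff Q.natDegree * x ^ Q.natDegree :=
        one_le_mul_of_one_le_of_one_le hlead (one_le_pow₀ hx)
    _ ≤ _ := Finset.single_le_sum (f := fun i => Q.coeff i * x ^ i)
        (fun i _ => mul_nonneg (hnn i) (by positivity)) (by simp)

lemma eval_le (Q : Polynomial ℝ)
    (hQc : ∀ i : ℕ, ∃ n : ℕ, Q.coeff i = (n : ℝ)) {x : ℝ} (hx : 1 ≤ x) :
    Q.eval x ≤ Q.eval 1 * x ^ Q.natDegree := by
  rw [eval_eq_sum_range, eval_eq_sum_range, Finset.sum_mul]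
  refine Finset.sum_le_sum fun i hi => ?_
  have hnn : 0 ≤ Q.coeff i := by
    obtain ⟨n, hn⟩ := hQc i
    rw [hn]; positivity
  rw [one_pow, mul_one]
  exact mul_le_mul_of_nonneg_left
    (pow_le_pow_right₀ hx (by simpa [Nat.lt_succ_iff] using hi)) hnn

lemma one_le_of_root {r s u m : ℕ} {q x : ℝ} (hx : 1 < x) (hq : 1 ≤ q)
    (h : x ^ (2 * m + r + s) - x ^ (2 * m + r) - q * x ^ m - x ^ u + 1 = 0) :
    1 ≤ s * log x * exp ((m + (r + s)) * log x) := by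
  have hx0 : 0 < x := by linarith
  have hpow : exp ((m + (r + s)) * log x) = x ^ (m + r) * x ^ s := by
    rw [← pow_add, ← exp_log (pow_pos hx0 _), log_pow]
    push_cast; ring_nf
  have hs : x ^ s - 1 ≤ s * log x * x ^ s := by
    -- The bound `1 - exp (-y) ≤ y` at `y = s * log x`.
    have h1 := Real.add_one_le_exp (-(s * log x))
    rw [exp_neg, ← log_pow, exp_log (pow_pos hx0 _), log_pow] at h1
    have h2 := mul_le_mul_of_nonneg_right h1 (pow_pos hx0 s).le
    rw [inv_mul_cancel₀ (pow_pos hx0 s).ne'] at h2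
    linarith
  have hu : 1 ≤ x ^ u := one_le_pow₀ hx.le
  have hm : 0 < x ^ m := pow_pos hx0 m
  have hkey : x ^ m * 1 ≤ x ^ m * (x ^ (m + r) * (x ^ s - 1)) := by
    have e : x ^ m * (x ^ (m + r) * (x ^ s - 1)) = x ^ (2 * m + r + s) - x ^ (2 * m + r) := by
      ring
    rw [e]
    nlinarith
  have hkey' := le_of_mul_le_mul_left hkey hm
  rw [hpow]
  have := mul_le_mul_of_nonneg_left hs (pow_pos hx0 (m + r)).le
  linarith

lemma le_of_root {r s u m d : ℕ} {q C x : ℝ} (hs : 0 < s) (hx : 1 < x) (hC : 0 ≤ C)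
    (hq : q ≤ C * x ^ d)
    (h : x ^ (2 * m + r + s) - x ^ (2 * m + r) - q * x ^ m - x ^ u + 1 = 0) :
    log x * exp (m * log x) ≤ (C + 1) * exp ((d + u : ℕ) * log x) := by
  have hx0 : 0 < x := by linarith
  have hL : 0 < log x := log_pos hx
  have hpow : ∀ k : ℕ, exp (k * log x) = x ^ k := fun k => by
    rw [← log_pow, exp_log (pow_pos hx0 _)]
  rw [hpow, hpow]
  have hm : 1 ≤ x ^ m := one_le_pow₀ hx.le
  have hlog : log x ≤ x ^ s - 1 := by
    have h1 := log_le_sub_one_of_pos hx0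
    have h2 : x ≤ x ^ s := le_self_pow₀ hx.le hs.ne'
    linarith
  have hd : x ^ d ≤ x ^ (d + u) := pow_le_pow_right₀ hx.le (by omega)
  have hu : x ^ u ≤ x ^ (d + u) := pow_le_pow_right₀ hx.le (by omega)
  have hmr : x ^ m ≤ x ^ (m + r) := pow_le_pow_right₀ hx.le (by omega)
  have hkey : x ^ m * (x ^ (m + r) * (x ^ s - 1)) ≤ x ^ m * ((C + 1) * x ^ (d + u)) := by
    have e : x ^ m * (x ^ (m + r) * (x ^ s - 1)) = x ^ (2 * m + r + s) - x ^ (2 * m + r) := by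
      ring
    rw [e]
    have a1 : q * x ^ m ≤ C * x ^ (d + u) * x ^ m :=
      mul_le_mul_of_nonneg_right (hq.trans (mul_le_mul_of_nonneg_left hd hC)) (by linarith)
    have a2 : x ^ u ≤ x ^ m * x ^ (d + u) :=
      hu.trans (le_mul_of_one_le_left (by positivity) hm)
    linarith
  have hkey' := le_of_mul_le_mul_left hkey (by linarith)
  calc log x * x ^ m ≤ (x ^ s - 1) * x ^ (m + r) := by gcongr; linarith
    _ ≤ _ := by linarith

lemma tendsto_log_nat : Tendsto (fun m : ℕ => log (m : ℝ)) atTop atTop :=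
  tendsto_log_atTop.comp tendsto_natCast_atTop_atTop

/-- An inequality `1 ≤ s L exp ((m + K) L)` forces `m L > (1 - ε) log m` for large `m`. -/
lemma lower_asymp (s K ε : ℝ) (hs : 0 < s) (hK : 0 ≤ K) (hε : 0 < ε) :
    ∀ᶠ m : ℕ in atTop, ∀ L : ℝ, 0 < L → 1 ≤ s * L * exp ((m + K) * L) →
      (1 - ε) * log m < m * L := by
  filter_upwards [tendsto_log_nat.eventually_gt_atTop (2 * s / (ε / 2) ^ 2),
    tendsto_log_nat.eventually_gt_atTop 0,
    tendsto_natCast_atTop_atTop.eventually_gt_atTop (K / (ε / 2)),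
    tendsto_natCast_atTop_atTop.eventually_gt_atTop (0 : ℝ)] with m h1 h2 h3 h4 L hL h
  by_contra! hcon
  rw [div_lt_iff₀ (by positivity)] at h1 h3
  have hmL : m * L ≤ log m := by nlinarith
  -- The extra `K L` in the exponent costs at most `(ε / 2) log m`.
  have hKL : K * L ≤ ε / 2 * log m := by nlinarith
  have hexp : exp ((m + K) * L) ≤ m * exp (-(ε / 2 * log m)) := by
    calc exp ((m + K) * L) ≤ exp (log m + -(ε / 2 * log m)) := by
          apply exp_le_exp.mpr; nlinarith
      _ = _ := by rw [exp_add, exp_log h4]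
  have hfin : exp (ε / 2 * log m) ≤ s * log m := by
    have a : 1 ≤ s * log m * exp (-(ε / 2 * log m)) := by
      calc 1 ≤ s * L * exp ((m + K) * L) := h
        _ ≤ s * L * (m * exp (-(ε / 2 * log m))) := by gcongr
        _ = s * (m * L) * exp (-(ε / 2 * log m)) := by ring
        _ ≤ _ := by gcongr
    rw [exp_neg, ← div_eq_mul_inv, le_div_iff₀ (exp_pos _)] at a
    linarith
  have hquad := quadratic_le_exp_of_nonneg (x := ε / 2 * log m) (by positivity)
  have : 0 ≤ ε / 2 * log m := by positivity
  nlinarith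

/-- An inequality `L exp (m L) ≤ C exp (D L)` forces `m L < (1 + ε) log m` for large `m`. -/
lemma upper_asymp (C D ε : ℝ) (hε : 0 < ε) :
    ∀ᶠ m : ℕ in atTop, ∀ L : ℝ, 0 < L → L * exp (m * L) ≤ C * exp (D * L) →
      m * L < (1 + ε) * log m := by
  filter_upwards [tendsto_log_nat.eventually_gt_atTop C,
    tendsto_log_nat.eventually_gt_atTop 0,
    tendsto_natCast_atTop_atTop.eventually_gt_atTop (D * (1 + ε) / ε),
    tendsto_natCast_atTop_atTop.eventually_gt_atTop (0 : ℝ)] with m h1 h2 h3 h4 L hL h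
  by_contra! hcon
  rw [div_lt_iff₀ hε] at h3
  -- `m ≤ (1 + ε) (m - D)` for such `m`.
  have hmD : log m ≤ (m - D) * L := by
    have : (1 + ε) * log m ≤ (1 + ε) * ((m - D) * L) := by nlinarith
    exact le_of_mul_le_mul_left this (by linarith)
  have hexp : m ≤ exp ((m - D) * L) := by
    calc (m : ℝ) = exp (log m) := (exp_log h4).symm
      _ ≤ _ := exp_le_exp.mpr hmD
  have hb : L * exp ((m - D) * L) ≤ C := by
    rw [sub_mul, exp_sub, ← mul_div_assoc, div_le_iff₀ (exp_pos _)]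
    exact h
  nlinarith

/-- Let `λ_m > 1` be (eventually in `m`) the unique real root greater than `1` of
`P_m(t) = t^(2m+r+s) − t^(2m+r) − Q(t)·t^m − t^u + 1`.  Then
`(m · log λ_m)/(log m) → 1` as `m → ∞`. -/
theorem stmt_3 (r s u : ℕ) (hs : 0 < s) (hu : 0 < u)
    (Q : Polynomial ℝ) (hQ : Q ≠ 0) (hQc : ∀ i : ℕ, ∃ n : ℕ, Q.coeff i = (n : ℝ))
    (lam : ℕ → ℝ)
    (hlam : ∀ᶠ m : ℕ in atTop, 1 < lam m ∧
      (lam m) ^ (2 * m + r + s) - (lam m) ^ (2 * m + r)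
        - Q.eval (lam m) * (lam m) ^ m - (lam m) ^ u + 1 = 0 ∧
      ∀ x : ℝ, 1 < x →
        x ^ (2 * m + r + s) - x ^ (2 * m + r) - Q.eval x * x ^ m - x ^ u + 1 = 0 →
        x = lam m) :
    Tendsto (fun m : ℕ => ((m : ℝ) * Real.log (lam m)) / Real.log m) atTop (nhds 1) := by
  rw [Metric.tendsto_nhds]
  intro ε hε
  filter_upwards [hlam, lower_asymp s (r + s) ε (by exact_mod_cast hs) (by positivity) hε,
    upper_asymp (Q.eval 1 + 1) (Q.natDegree + u : ℕ) ε hε,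
    tendsto_log_nat.eventually_gt_atTop 0] with m ⟨hx, hroot, _⟩ hlow hup hlog
  have hL : 0 < log (lam m) := log_pos hx
  have h1 := hlow _ hL (one_le_of_root hx (one_le_eval Q hQ hQc hx.le) hroot)
  have h2 := hup _ hL (le_of_root hs hx (zero_le_one.trans (one_le_eval Q hQ hQc le_rfl))
    (eval_le Q hQc hx.le) hroot)
  rw [Real.dist_eq, abs_sub_lt_iff]
  rw [← lt_div_iff₀ hlog] at h1
  rw [← div_lt_iff₀ hlog] at h2
  constructor <;> linarith
end

section
/- Let r ≥ 0, s > 0, u > 0 be fixed integers and let Q(t) be a nonzero polynomial with positive integer coefficients. For t > 0 and a natural number m, set f_m(t) = t^s − 1 + t^{−(2m+r)} and g_m(t) = Q(t)·t^{−(m+r)} + t^{−(2m+r−u)}, so that P_m(t)·t^{−(2m+r)} = f_m(t) − g_m(t) where P_m(t) = t^{2m+r+s} − t^{2m+r} − Q(t)·t^m − t^u + 1. Then for any fixed real c with 0 < c < 1, the inequality f_m(m^{c/m}) < g_m(m^{c/m}) holds for all sufficiently large m. -/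
open Polynomial Filter Real

/-!
Write `t = m^(c/m) = exp x` with `x = c log m / m`, so that `t ≥ 1`, `t^m = m^c` and `x → 0`.
Since `u ≥ 0`, the term `t^(-(2m+r))` of `f_m` is dominated by the term `t^(-(2m+r-u))` of `g_m`,
and `Q(t) ≥ 1` because `Q` is nonzero with natural coefficients
(`one_le_eval_of_natCoeff`). It is therefore enough that `t^(m+r) (t^s - 1) < 1`. As
`exp y - 1 ≤ y exp y`, the left side is at most `s c · m^(c-1) log m · exp ((r+s) x)`
(`pow_mul_pow_sub_one_le`), which tends to `0` because `c < 1` (`tendsto_majorant`).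
-/

lemma one_le_eval_of_natCoeff (Q : Polynomial ℝ) (hQ : Q ≠ 0)
    (hQc : ∀ i : ℕ, ∃ n : ℕ, Q.coeff i = (n : ℝ)) (t : ℝ) (ht : 1 ≤ t) : 1 ≤ Q.eval t := by
  have hlead : 1 ≤ Q.coeff Q.natDegree := by
    obtain ⟨n, hn⟩ := hQc Q.natDegree
    have h0 : Q.coeff Q.natDegree ≠ 0 := by simpa using hQ
    rw [hn] at h0 ⊢
    exact_mod_cast Nat.one_le_iff_ne_zero.mpr (by exact_mod_cast h0)
  rw [Polynomial.eval_eq_sum_range]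
  calc (1 : ℝ) ≤ Q.coeff Q.natDegree * t ^ Q.natDegree :=
        one_le_mul_of_one_le_of_one_le hlead (one_le_pow₀ ht)
    _ ≤ _ := by
        refine Finset.single_le_sum (f := fun i => Q.coeff i * t ^ i) (fun i _ => ?_)
          (Finset.self_mem_range_succ _)
        obtain ⟨n, hn⟩ := hQc i
        simp only [hn]
        positivity

lemma pow_mul_pow_sub_one_le (r s : ℕ) (x : ℝ) :
    exp x ^ r * (exp x ^ s - 1) ≤ s * x * exp (((r + s : ℕ) : ℝ) * x) := by
  have h : exp (s * x) - 1 ≤ s * x * exp (s * x) := by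
    have h1 := Real.add_one_le_exp (-(s * x))
    have h2 : exp (-(s * x)) * exp (s * x) = 1 := by rw [← Real.exp_add]; simp
    nlinarith [Real.exp_pos (s * x)]
  rw [← Real.exp_nat_mul, ← Real.exp_nat_mul]
  calc exp (r * x) * (exp (s * x) - 1) ≤ exp (r * x) * (s * x * exp (s * x)) := by gcongr
    _ = _ := by push_cast; rw [add_mul, Real.exp_add]; ring

lemma tendsto_majorant (k : ℕ) (a c : ℝ) (hc1 : c < 1) :
    Tendsto (fun m : ℕ => (m : ℝ) ^ c * (a * (log m * (c / m)) * exp (k * (log m * (c / m)))))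
      atTop (nhds 0) := by
  have h1 : Tendsto (fun y : ℝ => log y / y ^ (1 - c)) atTop (nhds 0) :=
    (isLittleO_log_rpow_atTop (by linarith)).tendsto_div_nhds_zero
  have h2 : Tendsto (fun y : ℝ => log y / y) atTop (nhds 0) :=
    Real.isLittleO_log_id_atTop.tendsto_div_nhds_zero
  have h3 : Tendsto (fun y : ℝ => a * c * (log y / y ^ (1 - c)) * exp (k * c * (log y / y)))
      atTop (nhds (a * c * 0 * exp (k * c * 0))) :=
    (h1.const_mul _).mul ((Real.continuous_exp.tendsto _).comp (h2.const_mul _))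
  have h4 := h3.comp (tendsto_natCast_atTop_atTop (R := ℝ))
  simp only [mul_zero, zero_mul] at h4
  refine h4.congr' ?_
  filter_upwards [eventually_gt_atTop 0] with m hm
  have hm' : (0 : ℝ) < m := by exact_mod_cast hm
  have hp : (m : ℝ) ^ c ≠ 0 := (Real.rpow_pos_of_pos hm' c).ne'
  have he : k * c * (log m / m) = k * (log m * (c / m)) := by ring
  simp only [Function.comp, he]
  rw [Real.rpow_sub hm', Real.rpow_one]
  field_simp

/-- With `f_m(t) = t^s − 1 + t^(−(2m+r))` and `g_m(t) = Q(t)·t^(−(m+r)) + t^(−(2m+r−u))`,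
for any fixed real `0 < c < 1` the inequality `f_m(m^(c/m)) < g_m(m^(c/m))` holds for all
sufficiently large `m`. -/
theorem stmt_5 (r s u : ℕ) (hs : 0 < s) (hu : 0 < u)
    (Q : Polynomial ℝ) (hQ : Q ≠ 0) (hQc : ∀ i : ℕ, ∃ n : ℕ, Q.coeff i = (n : ℝ))
    (f g : ℕ → ℝ → ℝ)
    (hf : ∀ m : ℕ, ∀ t : ℝ, 0 < t →
      f m t = t ^ s - 1 + t ^ (-(2 * (m : ℤ) + r)))
    (hg : ∀ m : ℕ, ∀ t : ℝ, 0 < t →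
      g m t = Q.eval t * t ^ (-((m : ℤ) + r)) + t ^ (-(2 * (m : ℤ) + r - u)))
    (c : ℝ) (hc0 : 0 < c) (hc1 : c < 1) :
    ∀ᶠ m : ℕ in atTop,
      f m ((m : ℝ) ^ (c / (m : ℝ))) < g m ((m : ℝ) ^ (c / (m : ℝ))) := by
  filter_upwards [(tendsto_majorant (r + s) s c hc1).eventually_lt_const one_pos,
    eventually_ge_atTop 1] with m hlt hm
  have hm0 : (0 : ℝ) < m := by exact_mod_cast hm
  have hm1 : (1 : ℝ) ≤ m := by exact_mod_cast hm
  have ht1 : 1 ≤ (m : ℝ) ^ (c / (m : ℝ)) := Real.one_le_rpow hm1 (by positivity)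
  have htm : ((m : ℝ) ^ (c / (m : ℝ))) ^ m = (m : ℝ) ^ c := by
    rw [← Real.rpow_mul_natCast hm0.le, div_mul_cancel₀ _ hm0.ne']
  have hte : (m : ℝ) ^ (c / (m : ℝ)) = exp (log m * (c / m)) := Real.rpow_def_of_pos hm0 _
  have hkey := pow_mul_pow_sub_one_le r s (log m * (c / m))
  rw [← hte] at hkey
  set t : ℝ := (m : ℝ) ^ (c / (m : ℝ)) with ht
  have ht0 : 0 < t := by linarith
  rw [hf m t ht0, hg m t ht0]
  have hsmall : t ^ s - 1 < t ^ (-((m : ℤ) + r)) := by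
    have hz : t ^ (-((m : ℤ) + r)) = (t ^ (m + r))⁻¹ := by
      rw [zpow_neg]; norm_cast
    rw [hz, ← one_div, lt_div_iff₀ (by positivity)]
    calc (t ^ s - 1) * t ^ (m + r) = (m : ℝ) ^ c * (t ^ r * (t ^ s - 1)) := by
          rw [← htm]; ring
      _ ≤ _ := mul_le_mul_of_nonneg_left hkey (by positivity)
      _ < 1 := hlt
  have hQt : t ^ (-((m : ℤ) + r)) ≤ Q.eval t * t ^ (-((m : ℤ) + r)) :=
    le_mul_of_one_le_left (by positivity) (one_le_eval_of_natCoeff Q hQ hQc t ht1)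
  have hmono : t ^ (-(2 * (m : ℤ) + r)) ≤ t ^ (-(2 * (m : ℤ) + r - u)) :=
    zpow_le_zpow_right₀ ht1 (by omega)
  linarith
end

section
/- Let r ≥ 0, s > 0, u > 0 be fixed integers and let Q(t) be a nonzero polynomial with positive integer coefficients. For t > 0 and a natural number m, set f_m(t) = t^s − 1 + t^{−(2m+r)} and g_m(t) = Q(t)·t^{−(m+r)} + t^{−(2m+r−u)}. Then for any fixed real c with c > 1, the inequality f_m(m^{c/m}) > g_m(m^{c/m}) holds for all sufficiently large m. -/
/-!
Put `t = m^(c/m) = exp (c log m / m)`, so that `t ≥ 1`, `t → 1` and `t^m = m^c ≥ m`.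
Then `f_m(t) ≥ t - 1 ≥ c log m / m ≥ log m / m`, while `g_m(t) ≤ (Q(t) + t^u) / m = O(1/m)` because
`Q(t) + t^u` stays bounded. Since `log m → ∞`, `f_m(t)` eventually exceeds `g_m(t)`.
-/

open Polynomial Filter Real

/-- With `f_m(t) = t^s − 1 + t^(−(2m+r))` and `g_m(t) = Q(t)·t^(−(m+r)) + t^(−(2m+r−u))`,
for any fixed real `c > 1` the inequality `f_m(m^(c/m)) > g_m(m^(c/m))` holds for all
sufficiently large `m`. -/
theorem stmt_6 (r s u : ℕ) (hs : 0 < s) (hu : 0 < u)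
    (Q : Polynomial ℝ) (hQ : Q ≠ 0) (hQc : ∀ i : ℕ, ∃ n : ℕ, Q.coeff i = (n : ℝ))
    (f g : ℕ → ℝ → ℝ)
    (hf : ∀ m : ℕ, ∀ t : ℝ, 0 < t →
      f m t = t ^ s - 1 + t ^ (-(2 * (m : ℤ) + r)))
    (hg : ∀ m : ℕ, ∀ t : ℝ, 0 < t →
      g m t = Q.eval t * t ^ (-((m : ℤ) + r)) + t ^ (-(2 * (m : ℤ) + r - u)))
    (c : ℝ) (hc : 1 < c) :
    ∀ᶠ m : ℕ in atTop,
      g m ((m : ℝ) ^ (c / (m : ℝ))) < f m ((m : ℝ) ^ (c / (m : ℝ))) := by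
  have ht : Tendsto (fun m : ℕ => (m : ℝ) ^ (c / (m : ℝ))) atTop (nhds 1) := by
    have h := (tendsto_rpow_div_mul_add c 1 0 (by norm_num)).comp
      (tendsto_natCast_atTop_atTop (R := ℝ))
    simpa [Function.comp_def] using h
  have hQt : ∀ᶠ m : ℕ in atTop,
      Q.eval ((m : ℝ) ^ (c / (m : ℝ))) + ((m : ℝ) ^ (c / (m : ℝ))) ^ u < Q.eval 1 + 2 := by
    have h1 : Tendsto (fun m : ℕ => Q.eval ((m : ℝ) ^ (c / (m : ℝ))) +
        ((m : ℝ) ^ (c / (m : ℝ))) ^ u) atTop (nhds (Q.eval 1 + 1 ^ u)) :=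
      ((Q.continuous.tendsto 1).comp ht).add (ht.pow u)
    exact h1.eventually_lt_const (by simp)
  have hlog : ∀ᶠ m : ℕ in atTop, Q.eval 1 + 2 < Real.log m :=
    (Real.tendsto_log_atTop.comp tendsto_natCast_atTop_atTop).eventually_gt_atTop _
  filter_upwards [hQt, hlog, eventually_ge_atTop 1] with m hm1 hm2 hm
  have hmR : (1 : ℝ) ≤ m := by exact_mod_cast hm
  have hm0 : (0 : ℝ) < m := by linarith
  have hlog0 : 0 ≤ Real.log m := Real.log_nonneg hmR
  have ht1 : 1 ≤ (m : ℝ) ^ (c / (m : ℝ)) := Real.one_le_rpow hmR (by positivity)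
  have htexp : 1 + Real.log m / m ≤ (m : ℝ) ^ (c / (m : ℝ)) := by
    rw [Real.rpow_def_of_pos hm0]
    have h1 := Real.add_one_le_exp (Real.log m * (c / m))
    have h2 : Real.log m / m ≤ Real.log m * (c / m) := by
      rw [div_eq_mul_one_div]
      gcongr
    linarith
  have htm : (m : ℝ) ≤ ((m : ℝ) ^ (c / (m : ℝ))) ^ m := by
    rw [← Real.rpow_natCast, ← Real.rpow_mul hm0.le, div_mul_cancel₀ _ hm0.ne']
    exact Real.self_le_rpow_of_one_le hmR hc.le
  generalize (m : ℝ) ^ (c / (m : ℝ)) = t at *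
  have ht0 : 0 < t := by linarith
  rw [hf m t ht0, hg m t ht0]
  have hQ0 : 0 ≤ Q.eval t := by
    rw [Polynomial.eval_eq_sum_range]
    refine Finset.sum_nonneg fun i _ => ?_
    obtain ⟨n, hn⟩ := hQc i
    rw [hn]
    positivity
  -- Every exponent at most `-m` gives a power of `t` bounded by `1 / m`.
  have hpow : ∀ k : ℤ, k ≤ -(m : ℤ) → t ^ k ≤ 1 / m := by
    intro k hk
    calc t ^ k ≤ t ^ (-(m : ℤ)) := zpow_le_zpow_right₀ ht1 hk
      _ = 1 / t ^ m := by rw [zpow_neg, zpow_natCast, one_div]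
      _ ≤ 1 / m := one_div_le_one_div_of_le hm0 htm
  have e1 : Q.eval t * t ^ (-((m : ℤ) + r)) ≤ Q.eval t * (1 / m) :=
    mul_le_mul_of_nonneg_left (hpow _ (by omega)) hQ0
  have e2 : t ^ (-(2 * (m : ℤ) + r - u)) ≤ t ^ u * (1 / m) := by
    have : -(2 * (m : ℤ) + r - u) = (u : ℤ) + -(2 * (m : ℤ) + r) := by ring
    rw [this, zpow_add₀ ht0.ne', zpow_natCast]
    exact mul_le_mul_of_nonneg_left (hpow _ (by omega)) (by positivity)
  have e3 : t ≤ t ^ s := le_self_pow₀ ht1 hs.ne'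
  have e4 : 0 < t ^ (-(2 * (m : ℤ) + r)) := by positivity
  have e5 : (Q.eval t + t ^ u) * (1 / m) ≤ Real.log m / m := by
    rw [mul_one_div]
    gcongr
    linarith
  linarith
end

section
/- For all nonnegative integers g and p, the polynomial B_{(g,p)}(t) = t^{2p+2g+2} − t^{2p+1} − 2t^{p+g+1} − t^{2g+1} + 1 has exactly one real root strictly greater than 1. -/
/-!
Put `a = 2p+1`, `b = 2g+1`, so that `p+g+1 = (a+b)/2`. Substituting `t = s²`, the polynomial is
`(s^(2a) - 1)(s^(2b) - 1) - 2 s^a s^b`, and dividing by `s^a s^b` turns the equation into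
`(s^a - s^(-a)) (s^b - s^(-b)) = 2`. Both factors are positive and strictly increasing for
`s > 1`, which gives uniqueness. The left side is `0` at `s = 1` and at least
`(3/2)^2 > 2` at `s = 2`, so the intermediate value theorem gives a root `t ∈ (1, 4]`.
-/

/-- The polynomial at `t = s²`, in factored form. -/
lemma poly_sq (g p : ℕ) (s : ℝ) :
    (s ^ 2) ^ (2 * p + 2 * g + 2) - (s ^ 2) ^ (2 * p + 1) - 2 * (s ^ 2) ^ (p + g + 1)
        - (s ^ 2) ^ (2 * g + 1) + 1 =
      ((s ^ (2 * p + 1)) ^ 2 - 1) * ((s ^ (2 * g + 1)) ^ 2 - 1)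
        - 2 * (s ^ (2 * p + 1) * s ^ (2 * g + 1)) := by
  ring

lemma sub_inv_lt_sub_inv {x y : ℝ} (hx : 0 < x) (h : x < y) : x - x⁻¹ < y - y⁻¹ := by
  have := inv_strictAnti₀ hx h
  linarith

lemma sub_inv_pos_of_one_lt {x : ℝ} (hx : 1 < x) : 0 < x - x⁻¹ := by
  have := inv_lt_one_of_one_lt₀ hx
  linarith

/-- For `s > 1`, a root `t = s²` satisfies `(s^a - s^(-a)) (s^b - s^(-b)) = 2`. -/
lemma sub_inv_mul_sub_inv_eq_two {g p : ℕ} {s : ℝ} (hs : 1 < s)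
    (h : (s ^ 2) ^ (2 * p + 2 * g + 2) - (s ^ 2) ^ (2 * p + 1) - 2 * (s ^ 2) ^ (p + g + 1)
        - (s ^ 2) ^ (2 * g + 1) + 1 = 0) :
    (s ^ (2 * p + 1) - (s ^ (2 * p + 1))⁻¹) * (s ^ (2 * g + 1) - (s ^ (2 * g + 1))⁻¹) = 2 := by
  rw [poly_sq] at h
  have hA : 0 < s ^ (2 * p + 1) := by positivity
  have hC : 0 < s ^ (2 * g + 1) := by positivity
  generalize s ^ (2 * p + 1) = A at *
  generalize s ^ (2 * g + 1) = C at *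
  field_simp
  linarith

lemma no_two_roots_s9 {g p : ℕ} {s r : ℝ} (hs : 1 < s) (hsr : s < r)
    (h : (s ^ 2) ^ (2 * p + 2 * g + 2) - (s ^ 2) ^ (2 * p + 1) - 2 * (s ^ 2) ^ (p + g + 1)
        - (s ^ 2) ^ (2 * g + 1) + 1 = 0)
    (h' : (r ^ 2) ^ (2 * p + 2 * g + 2) - (r ^ 2) ^ (2 * p + 1) - 2 * (r ^ 2) ^ (p + g + 1)
        - (r ^ 2) ^ (2 * g + 1) + 1 = 0) : False := by
  have e := sub_inv_mul_sub_inv_eq_two hs h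
  have e' := sub_inv_mul_sub_inv_eq_two (hs.trans hsr) h'
  have hs0 : 0 < s := by linarith
  have key : ∀ k : ℕ, 0 < s ^ (2 * k + 1) - (s ^ (2 * k + 1))⁻¹ ∧
      s ^ (2 * k + 1) - (s ^ (2 * k + 1))⁻¹ < r ^ (2 * k + 1) - (r ^ (2 * k + 1))⁻¹ := fun k =>
    ⟨sub_inv_pos_of_one_lt (one_lt_pow₀ hs (by omega)),
      sub_inv_lt_sub_inv (by positivity) (pow_lt_pow_left₀ hsr hs0.le (by omega))⟩
  have := mul_lt_mul'' (key p).2 (key g).2 (key p).1.le (key g).1.le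
  linarith

/-- For all nonnegative integers `g` and `p` the polynomial
`B_{(g,p)}(t) = t^(2p+2g+2) − t^(2p+1) − 2t^(p+g+1) − t^(2g+1) + 1`
has exactly one real root strictly greater than `1`. -/
theorem stmt_9 (g p : ℕ) :
    ∃! t : ℝ, 1 < t ∧
      t ^ (2 * p + 2 * g + 2) - t ^ (2 * p + 1) - 2 * t ^ (p + g + 1)
        - t ^ (2 * g + 1) + 1 = 0 := by
  have hex : ∃ s : ℝ, 1 < s ∧
      (s ^ 2) ^ (2 * p + 2 * g + 2) - (s ^ 2) ^ (2 * p + 1) - 2 * (s ^ 2) ^ (p + g + 1)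
        - (s ^ 2) ^ (2 * g + 1) + 1 = 0 := by
    let f : ℝ → ℝ := fun s =>
      (s ^ 2) ^ (2 * p + 2 * g + 2) - (s ^ 2) ^ (2 * p + 1) - 2 * (s ^ 2) ^ (p + g + 1)
        - (s ^ 2) ^ (2 * g + 1) + 1
    have hf : Continuous f := by fun_prop
    have h1 : f 1 = -2 := by simp only [f, one_pow]; norm_num
    have h2 : 0 ≤ f 2 := by
      simp only [f]
      rw [poly_sq]
      have two_le : ∀ k : ℕ, (2 : ℝ) ≤ 2 ^ (2 * k + 1) := fun k =>
        le_self_pow₀ (by norm_num) (by omega)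
      have hA := two_le p
      have hC := two_le g
      generalize (2 : ℝ) ^ (2 * p + 1) = A at *
      generalize (2 : ℝ) ^ (2 * g + 1) = C at *
      -- `A² - 1 ≥ (3/2) A` for `A ≥ 2`, and `(3/2)² ≥ 2`.
      have hA2 : 3 / 2 * A ≤ A ^ 2 - 1 := by nlinarith
      have hC2 : 3 / 2 * C ≤ C ^ 2 - 1 := by nlinarith
      have := mul_le_mul hA2 hC2 (by linarith) (by linarith)
      nlinarith [mul_nonneg (by linarith : (0 : ℝ) ≤ A) (by linarith : (0 : ℝ) ≤ C)]
    obtain ⟨s, hs, hfs⟩ := intermediate_value_Icc (by norm_num : (1 : ℝ) ≤ 2) hf.continuousOn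
      (show (0 : ℝ) ∈ Set.Icc (f 1) (f 2) from ⟨by rw [h1]; norm_num, h2⟩)
    refine ⟨s, lt_of_le_of_ne hs.1 ?_, hfs⟩
    rintro rfl
    rw [h1] at hfs
    norm_num at hfs
  obtain ⟨s, hs, h⟩ := hex
  refine ⟨s ^ 2, ⟨one_lt_pow₀ hs (by norm_num), h⟩, ?_⟩
  rintro t ⟨ht, h'⟩
  have hr : 1 < √t := Real.lt_sqrt_of_sq_lt (by simpa using ht)
  have hsq : √t ^ 2 = t := Real.sq_sqrt (by linarith)
  rw [← hsq] at h' ⊢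
  rcases lt_trichotomy s (√t) with hlt | heq | hgt
  · exact (no_two_roots_s9 hs hlt h h').elim
  · rw [heq]
  · exact (no_two_roots_s9 hr hgt h' h).elim
end

section
/- Let x, y, z be integers with x > 0, y > 0, x > z and y > z. Then the polynomial f_{(x,y,z)}(t) = t^{x+y−z} − t^x − t^y − t^{x−z} − t^{y−z} + 1 has exactly one real root strictly greater than 1. -/
/-!
Put `a = x`, `b = y`, `c = x - z`, `d = y - z`, all positive, so that `x + y - z = a + d = b + c`
and `f(t) = (t^(a+d) + 1) - (t^a + t^d) - (t^b + t^c)`.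

A root exists in `[1, 4]` by the intermediate value theorem: `f(1) = -2`, and `f(4) > 0` because
`(A - 2) * (D - 2) > 3` whenever `A, D ≥ 4`.

The root is unique because, for positive `a` and `d`, `(t^a + t^d) / (t^(a+d) + 1)` is strictly
decreasing on `t > 1` (`cross_lt`), while a root is a point where two such ratios add up to `1`.
-/

/-- Cross-multiplied form of the fact that `(A + D) / (A * D + 1)` strictly decreases when
`A, D > 1` both increase. -/
lemma cross_lt {A D A' D' : ℝ} (hA : 1 < A) (hD : 1 < D) (hA' : A < A') (hD' : D < D') :
    (A' + D') * (A * D + 1) < (A + D) * (A' * D' + 1) := by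
  have h1 : 0 < (A * A' - 1) * (D' - D) := mul_pos (by nlinarith) (by linarith)
  have h2 : 0 < (D * D' - 1) * (A' - A) := mul_pos (by nlinarith) (by linarith)
  nlinarith

/-- At most one root: at two roots `s < t` the two instances of `cross_lt` add up to a
contradiction. -/
lemma not_two_roots {a b c d : ℕ} (ha : a ≠ 0) (hb : b ≠ 0) (hc : c ≠ 0) (hd : d ≠ 0)
    (h : a + d = b + c) {s t : ℝ} (hs : 1 < s) (hst : s < t)
    (fs : s ^ (a + d) - s ^ a - s ^ b - s ^ c - s ^ d + 1 = 0)
    (ft : t ^ (a + d) - t ^ a - t ^ b - t ^ c - t ^ d + 1 = 0) : False := by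
  have s0 : (0 : ℝ) ≤ s := by linarith
  have one_lt {k : ℕ} (hk : k ≠ 0) : 1 < s ^ k := one_lt_pow₀ hs hk
  have lt {k : ℕ} (hk : k ≠ 0) : s ^ k < t ^ k := pow_lt_pow_left₀ hst s0 hk
  have h1 := cross_lt (one_lt ha) (one_lt hd) (lt ha) (lt hd)
  have h2 := cross_lt (one_lt hb) (one_lt hc) (lt hb) (lt hc)
  simp only [← pow_add] at h1 h2
  rw [← h] at h2
  have es : s ^ (a + d) + 1 = s ^ a + s ^ d + (s ^ b + s ^ c) := by linarith
  have et : t ^ (a + d) + 1 = t ^ a + t ^ d + (t ^ b + t ^ c) := by linarith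
  rw [es, et] at h1 h2
  linarith

lemma exists_root {a b c d : ℕ} (ha : a ≠ 0) (hb : b ≠ 0) (hc : c ≠ 0) (hd : d ≠ 0)
    (h : a + d = b + c) :
    ∃ t : ℝ, 1 < t ∧ t ^ (a + d) - t ^ a - t ^ b - t ^ c - t ^ d + 1 = 0 := by
  let f : ℝ → ℝ := fun t => t ^ (a + d) - t ^ a - t ^ b - t ^ c - t ^ d + 1
  have hf : Continuous f := by fun_prop
  have f1 : f 1 = -2 := by norm_num [f]
  have f4 : 0 ≤ f 4 := by
    have ge {k : ℕ} (hk : k ≠ 0) : (4 : ℝ) ≤ 4 ^ k := le_self_pow₀ (by norm_num) hk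
    have h1 : (4 : ℝ) ^ (a + d) = 4 ^ a * 4 ^ d := pow_add ..
    have h2 : (4 : ℝ) ^ (a + d) = 4 ^ b * 4 ^ c := by rw [h, pow_add]
    have h3 := mul_nonneg (sub_nonneg.2 (ge ha)) (sub_nonneg.2 (ge hd))
    have h4 := mul_nonneg (sub_nonneg.2 (ge hb)) (sub_nonneg.2 (ge hc))
    have := ge ha
    have := ge hb
    have := ge hc
    have := ge hd
    simp only [f]
    linarith
  obtain ⟨t, ht, h0⟩ := intermediate_value_Icc (by norm_num : (1 : ℝ) ≤ 4) hf.continuousOn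
    (show (0 : ℝ) ∈ Set.Icc (f 1) (f 4) from ⟨by rw [f1]; norm_num, f4⟩)
  refine ⟨t, lt_of_le_of_ne ht.1 ?_, h0⟩
  rintro rfl
  norm_num [f1] at h0

/-- Let `x, y, z` be integers with `x > 0`, `y > 0`, `x > z`, `y > z`.  Then
`f_{(x,y,z)}(t) = t^(x+y−z) − t^x − t^y − t^(x−z) − t^(y−z) + 1` has exactly one real root
strictly greater than `1`. -/
theorem stmt_11 (x y z : ℤ) (hx : 0 < x) (hy : 0 < y) (hxz : z < x) (hyz : z < y) :
    ∃! t : ℝ, 1 < t ∧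
      t ^ (x + y - z) - t ^ x - t ^ y - t ^ (x - z) - t ^ (y - z) + 1 = 0 := by
  obtain ⟨a, ea⟩ := Int.eq_ofNat_of_zero_le hx.le
  obtain ⟨b, eb⟩ := Int.eq_ofNat_of_zero_le hy.le
  obtain ⟨c, ec⟩ := Int.eq_ofNat_of_zero_le (sub_pos.2 hxz).le
  obtain ⟨d, ed⟩ := Int.eq_ofNat_of_zero_le (sub_pos.2 hyz).le
  have en : x + y - z = ((a + d : ℕ) : ℤ) := by push_cast; omega
  have ha : a ≠ 0 := by omega
  have hb : b ≠ 0 := by omega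
  have hc : c ≠ 0 := by omega
  have hd : d ≠ 0 := by omega
  have h : a + d = b + c := by omega
  rw [en, ec, ed, ea, eb]
  simp only [zpow_natCast]
  obtain ⟨t, ht, h0⟩ := exists_root ha hb hc hd h
  refine ⟨t, ⟨ht, h0⟩, ?_⟩
  rintro s ⟨hs, hs0⟩
  rcases lt_trichotomy s t with hlt | heq | hlt
  · exact (not_two_roots ha hb hc hd h hs hlt hs0 h0).elim
  · exact heq
  · exact (not_two_roots ha hb hc hd h ht hlt h0 hs0).elim
end

section
/- Fix an integer g ≥ 0, and for each nonnegative integer p let r_{(g,p)} denote the unique real root greater than 1 of B_{(g,p)}(t) = t^{2p+2g+2} − t^{2p+1} − 2t^{p+g+1} − t^{2g+1} + 1. Then for any real constants c₁ and c₂ with 0 < c₁ < 1 and c₂ > 1, the inequalities p^{c₁/p} < r_{(g,p)} < p^{c₂/p} hold for all sufficiently large p. -/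
/-!
Writing the equation `B(r) = 0` as `r^(2p+1) (r^(2g+1) - 1) = 2 r^(p+g+1) + r^(2g+1) - 1`
and dividing by a power of `r` gives two bounds valid at the root:
`r^p (r - 1) < 3` when `g ≤ p` (`root_upper`), and `2 ≤ r^p (r^(2g+1) - 1)` (`root_lower`).
Both products are increasing in `r > 1`. At `s = p^(c/p)` one has `s^p = p^c` and
`s - 1`, `s^(2g+1) - 1` are of order `log p / p`, so these quantities are of order
`p^(c-1) log p`. This tends to infinity if `c > 1`, which excludes `r ≥ s`, and to zero
if `c < 1`, which excludes `r ≤ s`.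
-/

open Filter Real

theorem root_upper {g p : ℕ} {r : ℝ} (hr : 1 < r) (hgp : g ≤ p)
    (h : r ^ (2 * p + 2 * g + 2) - r ^ (2 * p + 1) - 2 * r ^ (p + g + 1)
        - r ^ (2 * g + 1) + 1 = 0) : r ^ p * (r - 1) < 3 := by
  have hpos : 0 < r ^ (p + g + 1) := by positivity
  have h1 : r ^ (2 * g + 1) ≤ r ^ (p + g + 1) := pow_le_pow_right₀ hr.le (by omega)
  have hg : 1 ≤ r ^ g := one_le_pow₀ hr.le
  -- `r^(2g+1) - 1 - r^g (r - 1) = (r^g - 1) (r^(g+1) + 1) ≥ 0`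
  have h2 : 0 ≤ r ^ (2 * p + 1) * ((r ^ g - 1) * (r ^ (g + 1) + 1)) :=
    mul_nonneg (by positivity) (mul_nonneg (by linarith) (by positivity))
  have h3 : r ^ (p + g + 1) * (r ^ p * (r - 1)) < r ^ (p + g + 1) * 3 := by
    have e : r ^ (p + g + 1) * (r ^ p * (r - 1))
        = (r ^ (2 * p + 2 * g + 2) - r ^ (2 * p + 1))
          - r ^ (2 * p + 1) * ((r ^ g - 1) * (r ^ (g + 1) + 1)) := by ring
    rw [e]; linarith
  exact lt_of_mul_lt_mul_left h3 hpos.le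

theorem root_lower {g p : ℕ} {r : ℝ} (hr : 1 < r)
    (h : r ^ (2 * p + 2 * g + 2) - r ^ (2 * p + 1) - 2 * r ^ (p + g + 1)
        - r ^ (2 * g + 1) + 1 = 0) : 2 ≤ r ^ p * (r ^ (2 * g + 1) - 1) := by
  have hpos : 0 < r ^ (p + 1) := by positivity
  have h1 : 1 ≤ r ^ (2 * g + 1) := one_le_pow₀ hr.le
  have h2 : r ^ (p + 1) ≤ r ^ (p + g + 1) := pow_le_pow_right₀ hr.le (by omega)
  have h3 : r ^ (p + 1) * 2 ≤ r ^ (p + 1) * (r ^ p * (r ^ (2 * g + 1) - 1)) := by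
    have e : r ^ (p + 1) * (r ^ p * (r ^ (2 * g + 1) - 1))
        = r ^ (2 * p + 2 * g + 2) - r ^ (2 * p + 1) := by ring
    rw [e]; linarith
  exact le_of_mul_le_mul_left h3 hpos

/-- Fix `g ≥ 0`, and for each `p` let `r_{(g,p)} > 1` be the unique real root greater
than `1` of `B_{(g,p)}(t) = t^(2p+2g+2) − t^(2p+1) − 2t^(p+g+1) − t^(2g+1) + 1`.  Then for
any `0 < c₁ < 1 < c₂`, `p^(c₁/p) < r_{(g,p)} < p^(c₂/p)` for all sufficiently large `p`. -/
theorem stmt_12 (g : ℕ) (rt : ℕ → ℝ)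
    (hroot : ∀ p : ℕ, 1 < rt p ∧
      (rt p) ^ (2 * p + 2 * g + 2) - (rt p) ^ (2 * p + 1) - 2 * (rt p) ^ (p + g + 1)
        - (rt p) ^ (2 * g + 1) + 1 = 0 ∧
      ∀ t : ℝ, 1 < t →
        t ^ (2 * p + 2 * g + 2) - t ^ (2 * p + 1) - 2 * t ^ (p + g + 1)
          - t ^ (2 * g + 1) + 1 = 0 → t = rt p)
    (c₁ c₂ : ℝ) (hc₁0 : 0 < c₁) (hc₁1 : c₁ < 1) (hc₂ : 1 < c₂) :
    ∀ᶠ p : ℕ in atTop,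
      (p : ℝ) ^ (c₁ / (p : ℝ)) < rt p ∧ rt p < (p : ℝ) ^ (c₂ / (p : ℝ)) := by
  have hlog : Tendsto (fun p : ℕ => Real.log (p : ℝ)) atTop atTop :=
    Real.tendsto_log_atTop.comp tendsto_natCast_atTop_atTop
  have hK : (0 : ℝ) < (2 * g + 1) * c₁ := by positivity
  have hlit : ∀ᶠ p : ℕ in atTop,
      ‖Real.log (p : ℝ)‖ ≤ (1 / (2 * ((2 * g + 1) * c₁))) * ‖(p : ℝ) ^ (1 - c₁)‖ :=
    tendsto_natCast_atTop_atTop.eventually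
      ((isLittleO_log_rpow_atTop (r := 1 - c₁) (by linarith)).bound
        (c := 1 / (2 * ((2 * g + 1) * c₁))) (by positivity))
  filter_upwards [hlog.eventually_ge_atTop 3, hlit, eventually_ge_atTop g,
    eventually_ge_atTop 1] with p hp3 hpl hpg hp1
  obtain ⟨hr, hB, -⟩ := hroot p
  have hp : (1 : ℝ) ≤ p := by exact_mod_cast hp1
  have hp0 : (0 : ℝ) < p := by linarith
  have hpow : ∀ c : ℝ, ((p : ℝ) ^ (c / (p : ℝ))) ^ p = (p : ℝ) ^ c := fun c => by
    rw [← Real.rpow_natCast, ← Real.rpow_mul hp0.le, div_mul_cancel₀ _ hp0.ne']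
  constructor
  · by_contra! hle
    have h2 := root_lower hr hB
    set s : ℝ := (p : ℝ) ^ (c₁ / (p : ℝ)) with hs
    have hmono : rt p ^ p * (rt p ^ (2 * g + 1) - 1) ≤ s ^ p * (s ^ (2 * g + 1) - 1) := by
      have h1 : 1 ≤ rt p ^ (2 * g + 1) := one_le_pow₀ hr.le
      have h0 : 0 ≤ rt p := by linarith
      have hs0 : 0 ≤ s := by linarith
      exact mul_le_mul (pow_le_pow_left₀ h0 hle _)
        (sub_le_sub_right (pow_le_pow_left₀ h0 hle _) 1) (by linarith) (by positivity)
    set x : ℝ := (2 * g + 1) * c₁ * Real.log p / p with hx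
    have hx0 : 0 ≤ x := by positivity
    have hsx : s ^ (2 * g + 1) = Real.exp x := by
      rw [hs, Real.rpow_def_of_pos hp0, ← Real.exp_nat_mul, hx]
      congr 1; push_cast; ring
    have hpc : 1 ≤ (p : ℝ) ^ c₁ := Real.one_le_rpow hp hc₁0.le
    have hxp : (p : ℝ) ^ c₁ * x ≤ 1 / 2 := by
      rw [Real.norm_of_nonneg (by linarith), Real.norm_of_nonneg (by positivity)] at hpl
      have hpp : (p : ℝ) ^ c₁ * (p : ℝ) ^ (1 - c₁) = p := by
        rw [← Real.rpow_add hp0]; simp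
      calc (p : ℝ) ^ c₁ * x
          = (p : ℝ) ^ c₁ * ((2 * g + 1) * c₁) / p * Real.log p := by rw [hx]; ring
        _ ≤ (p : ℝ) ^ c₁ * ((2 * g + 1) * c₁) / p
              * ((1 / (2 * ((2 * g + 1) * c₁))) * (p : ℝ) ^ (1 - c₁)) := by gcongr
        _ = ((p : ℝ) ^ c₁ * (p : ℝ) ^ (1 - c₁)) / p * (1 / 2) := by field_simp
        _ = 1 / 2 := by rw [hpp]; field_simp
    have hx1 : x ≤ 1 := by nlinarith
    have hexp : Real.exp x - 1 ≤ 2 * x := by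
      have := Real.abs_exp_sub_one_le (x := x) (by rwa [abs_of_nonneg hx0])
      rw [abs_of_nonneg hx0] at this
      exact (le_abs_self _).trans this
    rw [hpow c₁, hsx] at hmono
    nlinarith
  · by_contra! hle
    have h3 := root_upper hr hpg hB
    have hs1 : c₂ * Real.log p / p ≤ rt p - 1 := by
      have := Real.add_one_le_exp (Real.log p * (c₂ / p))
      rw [← Real.rpow_def_of_pos hp0] at this
      have e : c₂ * Real.log p / p = Real.log p * (c₂ / p) := by ring
      linarith
    have hpr : (p : ℝ) ≤ rt p ^ p := by
      calc (p : ℝ) = (p : ℝ) ^ (1 : ℝ) := (Real.rpow_one _).symm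
        _ ≤ (p : ℝ) ^ c₂ := Real.rpow_le_rpow_of_exponent_le hp hc₂.le
        _ = ((p : ℝ) ^ (c₂ / (p : ℝ))) ^ p := (hpow c₂).symm
        _ ≤ rt p ^ p := pow_le_pow_left₀ (by positivity) hle _
    have h4 : (p : ℝ) * (c₂ * Real.log p / p) ≤ rt p ^ p * (rt p - 1) :=
      mul_le_mul hpr hs1 (by positivity) (by positivity)
    rw [mul_div_cancel₀ _ hp0.ne'] at h4
    nlinarith
end

section
/- Fix an integer g ≥ 0, and for each nonnegative integer p let r_{(g,p)} denote the unique real root greater than 1 of B_{(g,p)}(t) = t^{2p+2g+2} − t^{2p+1} − 2t^{p+g+1} − t^{2g+1} + 1. Then the limit as p → ∞ of (p · log r_{(g,p)})/(log p) equals 1. -/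
open Filter Real

/-!
Write `r` for the root, `m = 2g + 1` and `x = p log r`. The equation reads
`r^p * (r^p * r * (r^m - 1)) = 2 r^p r^(g+1) + (r^m - 1)`, and it forces
`2 ≤ r^p (r^m - 1) ≤ 3 r^m` (`root_bounds`). For `p ≥ m` the upper bound gives `r^m ≤ 4`, so
`r^m - 1` is comparable to `log r`, and hence `p / (2m) ≤ x e^x ≤ 12 p` (`mul_exp_bounds`).
Taking logarithms, `x = log p - log x + O(1)` with `log x = O(log log p)`, so `x / log p → 1`
(`tendsto_div_log`).
-/

lemma root_bounds {g p : ℕ} {r : ℝ} (hr : 1 < r)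
    (h : r ^ (2 * p + 2 * g + 2) - r ^ (2 * p + 1) - 2 * r ^ (p + g + 1)
        - r ^ (2 * g + 1) + 1 = 0) :
    2 ≤ r ^ p * (r ^ (2 * g + 1) - 1) ∧ r ^ p * (r ^ (2 * g + 1) - 1) ≤ 3 * r ^ (2 * g + 1) := by
  have ha : 1 ≤ r ^ p := one_le_pow₀ hr.le
  have hR : 1 ≤ r ^ (2 * g + 1) := one_le_pow₀ hr.le
  have hG : 1 ≤ r ^ g := one_le_pow₀ hr.le
  have hGR : r ^ g * r ≤ r ^ (2 * g + 1) := by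
    rw [← pow_succ]
    exact pow_le_pow_right₀ hr.le (by omega)
  have key : r ^ p * (r * (r ^ p * (r ^ (2 * g + 1) - 1)))
      = r ^ p * (2 * (r ^ g * r)) + (r ^ (2 * g + 1) - 1) := by
    linear_combination h
  generalize r ^ (2 * g + 1) = R at *
  generalize r ^ p = a at *
  generalize r ^ g = G at *
  have ha0 : 0 < a := by linarith
  constructor
  · have h1 : 2 * (G * r) ≤ r * (a * (R - 1)) :=
      le_of_mul_le_mul_left (by linarith) ha0
    have h2 : r * 2 ≤ r * (a * (R - 1)) := by nlinarith
    exact le_of_mul_le_mul_left h2 (by linarith)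
  · have h1 : r * (a * (R - 1)) ≤ 3 * R :=
      le_of_mul_le_mul_left (by nlinarith) ha0
    have h2 : 0 ≤ a * (R - 1) := mul_nonneg ha0.le (by linarith)
    nlinarith

lemma mul_exp_bounds {g p : ℕ} {r : ℝ} (hr : 1 < r) (hp : 2 * g + 1 ≤ p)
    (h : r ^ (2 * p + 2 * g + 2) - r ^ (2 * p + 1) - 2 * r ^ (p + g + 1)
        - r ^ (2 * g + 1) + 1 = 0) :
    (p : ℝ) / (2 * (2 * g + 1)) ≤ p * log r * exp (p * log r) ∧
      p * log r * exp (p * log r) ≤ 12 * p := by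
  obtain ⟨h1, h2⟩ := root_bounds hr h
  have hexp : exp (p * log r) = r ^ p := by
    rw [exp_nat_mul, exp_log (by linarith)]
  have hRa : r ^ (2 * g + 1) ≤ r ^ p := pow_le_pow_right₀ hr.le hp
  have hR : 1 ≤ r ^ (2 * g + 1) := one_le_pow₀ hr.le
  have hlogR : log (r ^ (2 * g + 1)) = (2 * g + 1) * log r := by
    rw [log_pow]; push_cast; ring
  have hL : 0 < log r := log_pos hr
  have hlo : (2 * g + 1) * log r ≤ r ^ (2 * g + 1) - 1 := by
    rw [← hlogR]; exact log_le_sub_one_of_pos (by linarith)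
  have hup : 1 - (r ^ (2 * g + 1))⁻¹ ≤ (2 * g + 1) * log r := by
    rw [← hlogR]; exact one_sub_inv_le_log_of_pos (by linarith)
  rw [hexp]
  have hg : (0 : ℝ) ≤ g := g.cast_nonneg
  have hp0 : (0 : ℝ) ≤ p := p.cast_nonneg
  generalize r ^ (2 * g + 1) = R at *
  generalize r ^ p = a at *
  generalize log r = L at *
  have hR4 : R ≤ 4 := by
    have : a * (R - 1) ≤ a * 3 := by linarith
    linarith [le_of_mul_le_mul_left this (by linarith)]
  have hup' : R - 1 ≤ 4 * ((2 * g + 1) * L) := by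
    have h3 : R * (1 - R⁻¹) = R - 1 := by
      have : R ≠ 0 := by linarith
      field_simp
    have h4 : R * (1 - R⁻¹) ≤ R * ((2 * g + 1) * L) :=
      mul_le_mul_of_nonneg_left hup (by linarith)
    have h5 : R * ((2 * g + 1) * L) ≤ 4 * ((2 * g + 1) * L) :=
      mul_le_mul_of_nonneg_right hR4 (by positivity)
    linarith
  have ha : 0 ≤ a := by linarith
  constructor
  · rw [div_le_iff₀ (by positivity)]
    have h3 : 2 ≤ a * (4 * ((2 * g + 1) * L)) :=
      h1.trans (mul_le_mul_of_nonneg_left hup' ha)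
    nlinarith [mul_le_mul_of_nonneg_left h3 hp0]
  · have h3 : L ≤ R - 1 := by nlinarith [mul_nonneg hg hL.le]
    have h4 : a * L ≤ 12 := by
      linarith [mul_le_mul_of_nonneg_left h3 ha]
    nlinarith [mul_le_mul_of_nonneg_left h4 hp0]

/-- A sequence with `x e^x` of exact order `p` satisfies `x ~ log p`. -/
lemma tendsto_div_log {x : ℕ → ℝ} {c C : ℝ} (hc : 0 < c) (hC : 1 ≤ C)
    (hx : ∀ᶠ p : ℕ in atTop, 0 < x p ∧ c * p ≤ x p * exp (x p) ∧ x p * exp (x p) ≤ C * p) :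
    Tendsto (fun p : ℕ => x p / log p) atTop (nhds 1) := by
  have hlog : Tendsto (fun p : ℕ => log (p : ℝ)) atTop atTop :=
    tendsto_log_atTop.comp tendsto_natCast_atTop_atTop
  have hinv : ∀ K : ℝ, Tendsto (fun p : ℕ => K / log (p : ℝ)) atTop (nhds 0) := fun K =>
    hlog.const_div_atTop K
  have hll : Tendsto (fun p : ℕ => log (log (p : ℝ)) / log p) atTop (nhds 0) :=
    (isLittleO_log_id_atTop.tendsto_div_nhds_zero).comp hlog
  have hupT : Tendsto (fun p : ℕ => 1 + (log C + 1) / log (p : ℝ)) atTop (nhds 1) := by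
    simpa using (hinv (log C + 1)).const_add 1
  have hloT : Tendsto (fun p : ℕ => 1 + (log c - log 2) / log (p : ℝ)
      - log (log (p : ℝ)) / log p) atTop (nhds 1) := by
    simpa using ((hinv (log c - log 2)).const_add 1).sub hll
  have hlC : 0 ≤ log C := log_nonneg hC
  have hbounds : ∀ᶠ p : ℕ in atTop, 0 < log (p : ℝ) ∧ x p ≤ log p + (log C + 1) ∧
      log p + (log c - log 2) - log (log p) ≤ x p := by
    filter_upwards [hx, hlog.eventually_ge_atTop (log C + 1), eventually_gt_atTop 0]
      with p ⟨h0, h1, h2⟩ hl hp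
    have hp' : (0 : ℝ) < p := by exact_mod_cast hp
    have hl0 : 0 < log (p : ℝ) := by linarith
    have hup : x p ≤ log p + (log C + 1) := by
      rcases le_total (x p) 1 with h | h
      · linarith
      · have h3 : exp (x p) ≤ C * p :=
          (le_mul_of_one_le_left (exp_pos _).le h).trans h2
        have h4 := (le_log_iff_exp_le (by positivity)).2 h3
        rw [log_mul (by positivity) hp'.ne'] at h4
        linarith
    refine ⟨hl0, hup, ?_⟩
    have h3 := log_le_log (by positivity) h1
    rw [log_mul hc.ne' hp'.ne', log_mul h0.ne' (exp_pos _).ne', log_exp] at h3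
    have h4 : log (x p) ≤ log (2 * log p) := log_le_log h0 (by linarith)
    rw [log_mul two_ne_zero hl0.ne'] at h4
    linarith
  refine tendsto_of_tendsto_of_tendsto_of_le_of_le' hloT hupT ?_ ?_
  · filter_upwards [hbounds] with p ⟨hl, _, h⟩
    rw [le_div_iff₀ hl]
    refine le_trans (le_of_eq ?_) h
    field_simp
  · filter_upwards [hbounds] with p ⟨hl, h, _⟩
    rw [div_le_iff₀ hl]
    refine le_trans h (le_of_eq ?_)
    field_simp

/-- Fix `g ≥ 0`, and for each `p` let `r_{(g,p)} > 1` be the unique real root greater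
than `1` of `B_{(g,p)}(t) = t^(2p+2g+2) − t^(2p+1) − 2t^(p+g+1) − t^(2g+1) + 1`.  Then
`(p · log r_{(g,p)})/(log p) → 1` as `p → ∞`. -/
theorem stmt_13 (g : ℕ) (rt : ℕ → ℝ)
    (hroot : ∀ p : ℕ, 1 < rt p ∧
      (rt p) ^ (2 * p + 2 * g + 2) - (rt p) ^ (2 * p + 1) - 2 * (rt p) ^ (p + g + 1)
        - (rt p) ^ (2 * g + 1) + 1 = 0 ∧
      ∀ t : ℝ, 1 < t →
        t ^ (2 * p + 2 * g + 2) - t ^ (2 * p + 1) - 2 * t ^ (p + g + 1)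
          - t ^ (2 * g + 1) + 1 = 0 → t = rt p) :
    Tendsto (fun p : ℕ => ((p : ℝ) * Real.log (rt p)) / Real.log p) atTop (nhds 1) := by
  refine tendsto_div_log (c := 1 / (2 * (2 * g + 1))) (C := 12) (by positivity) (by norm_num) ?_
  filter_upwards [eventually_ge_atTop (2 * g + 1)] with p hp
  obtain ⟨hr, h, -⟩ := hroot p
  obtain ⟨h1, h2⟩ := mul_exp_bounds hr hp h
  have hp0 : (0 : ℝ) < p := by exact_mod_cast (by omega : 0 < p)
  refine ⟨mul_pos hp0 (log_pos hr), ?_, h2⟩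
  rwa [one_div_mul_eq_div]
end

section
/- Let g and p be nonnegative integers with gcd(2g+1, p+g+1) = 1. Then gcd(p+g+1, 3p−g+1) + gcd(2p+1, 2p+1) + gcd(p−g, 3p+g+2) = 2p+4, where all gcds are taken of absolute values with the convention gcd(0, w) = |w|. (Here (x, y, z) = (p+g+1, 2p+1, p−g), and the three summands are gcd(x, y+z), gcd(y, z+x) and gcd(z, x+y), which count the boundary components of the fiber F_{a_{(g,p)}} on the three cusp tori.) -/
/-!
Write `x = p + g + 1`, `z = p - g` and `m = x - z = 2g + 1`. The outer two entries satisfy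
`3p - g + 1 = 3x - 2m` and `3p + g + 2 = 3z + 2m`, and `m` is coprime to `x`, hence also to
`z = x - m`. So the outer gcds are `gcd(x, 2)` and `gcd(z, 2)`; as `m` is odd, exactly one of
`x`, `z` is even, and these sum to `3`. The middle gcd is `2p + 1`.
-/

lemma gcd_three_mul_add_two_mul {a m b : ℤ} (h : IsCoprime a m) (hb : b = 3 * a + 2 * m) :
    Int.gcd a b = Int.gcd a 2 := by
  have h1 : Int.gcd a b = Int.gcd a (2 * m) := by
    rw [hb, add_comm]; simp
  rw [h1, Int.gcd_eq_natAbs, Int.gcd_eq_natAbs, Int.natAbs_mul]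
  exact Nat.Coprime.gcd_mul_right_cancel_right _ (Int.isCoprime_iff_gcd_eq_one.mp h.symm)

lemma gcd_two_eq_ite (a : ℤ) : Int.gcd a 2 = if a % 2 = 0 then 2 else 1 := by
  have h2 : Int.gcd a 2 = Nat.gcd (a.natAbs % 2) 2 := by
    rw [Int.gcd_eq_natAbs, Nat.gcd_comm, Nat.gcd_rec]; rfl
  rw [h2]
  split_ifs with h
  · rw [show a.natAbs % 2 = 0 by omega]; norm_num
  · rw [show a.natAbs % 2 = 1 by omega]; norm_num


/-- Let `g` and `p` be nonnegative integers with `gcd(2g+1, p+g+1) = 1`.  Then, with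
`(x,y,z) = (p+g+1, 2p+1, p−g)`,
`gcd(x, y+z) + gcd(y, z+x) + gcd(z, x+y) = 2p+4`, i.e.
`gcd(p+g+1, 3p−g+1) + gcd(2p+1, 2p+1) + gcd(p−g, 3p+g+2) = 2p+4`. -/
theorem stmt_16 (g p : ℕ) (h : Nat.gcd (2 * g + 1) (p + g + 1) = 1) :
    Int.gcd ((p : ℤ) + g + 1) (3 * (p : ℤ) - g + 1)
      + Int.gcd (2 * (p : ℤ) + 1) (2 * (p : ℤ) + 1)
      + Int.gcd ((p : ℤ) - g) (3 * (p : ℤ) + g + 2) = 2 * p + 4 := by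
  have hx : IsCoprime ((p : ℤ) + g + 1) (2 * g + 1) := by
    have := (Nat.isCoprime_iff_coprime.mpr h).symm
    push_cast at this
    exact this
  have hz : IsCoprime ((p : ℤ) - g) (2 * g + 1) := by
    obtain ⟨u, v, huv⟩ := hx
    exact ⟨u, v + u, by linear_combination huv⟩
  rw [gcd_three_mul_add_two_mul hx.neg_right (by ring),
    gcd_three_mul_add_two_mul hz (by ring), gcd_two_eq_ite, gcd_two_eq_ite, Int.gcd_self]
  split_ifs <;> omega
end
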